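/- Let n ≥ 1, let d ∈ ℝⁿ be a constant disturbance, and let k_P, k_D, k_I, α, β, γ, σ be real numbers with k_I ≠ 0 such that both P = [[k_P, α, σ], [α, 1, β], [σ, β, γ]] and Q = [[2(k_P α − σ), k_D α − β, k_I α + k_P β − γ], [k_D α − β, 2(k_D − α), k_I + β k_D − σ], [k_I α + k_P β − γ, k_I + β k_D − σ, 2 β k_I]] are positive definite. Then every solution e, z : ℝ → ℝⁿ of the disturbed closed-loop system ż(t) = e(t), ë(t) = d − k_P e(t) − k_D ė(t) − k_I z(t) satisfies: e(t) → 0, ė(t) → 0, and z(t) → (1/k_I)·d as t → ∞. -/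

import Mathlib

/-!
Put `A = !![0, 1, 0; -kP, -kD, -kI; 1, 0, 0]` and `y = z - (1 / kI) • d`. Measuring the integral
error from its equilibrium value absorbs the disturbance, so `x = (e, ė, y)` solves `ẋ = A x`, and
the matrices of the theorem are tied together by the Lyapunov equation `Aᵀ P + P A = -Q`. The Gram
matrix `G` of `x` satisfies `Ġ = A G + G Aᵀ`, hence `W = tr (P G)` satisfies
`Ẇ = tr ((Aᵀ P + P A) G) = -tr (Q G) ≤ -k W` whenever `k P ≤ Q` in the Loewner order. So `W` decays
exponentially, and it dominates a positive multiple of `‖e‖² + ‖ė‖² + ‖y‖²`.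
-/

open Filter Matrix Set
open scoped Topology MatrixOrder Matrix.Module

section Loewner

open scoped ComplexOrder

theorem exists_pos_smul_le_of_posDef {𝕜 ι : Type*} [RCLike 𝕜] [Finite ι] {M Q : Matrix ι ι 𝕜}
    (hM : M.IsHermitian) (hQ : Q.PosDef) : ∃ c : ℝ, 0 < c ∧ c • M ≤ Q := by
  classical
  have := Fintype.ofFinite ι
  cases isEmpty_or_nonempty ι
  · exact ⟨1, one_pos, (Subsingleton.elim _ _).le⟩
  obtain ⟨r, hr, hrQ⟩ : ∃ r > 0, algebraMap ℝ (Matrix ι ι 𝕜) r ≤ Q :=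
    (CFC.exists_pos_algebraMap_le_iff hQ.isHermitian.isSelfAdjoint).2
      fun _ hs ↦ hQ.isStrictlyPositive.spectrum_pos hs
  obtain ⟨b, hb, hMb⟩ : ∃ b > 0, M ≤ algebraMap ℝ (Matrix ι ι 𝕜) b := by
    obtain ⟨b, hb⟩ := (ContinuousFunctionalCalculus.isCompact_spectrum (R := ℝ) M).bddAbove
    refine ⟨max b 1, by positivity, (le_algebraMap_iff_spectrum_le hM.isSelfAdjoint).2 ?_⟩
    exact fun s hs ↦ (hb hs).trans (le_max_left b 1)
  refine ⟨r / b, by positivity, ?_⟩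
  calc (r / b) • M ≤ (r / b) • algebraMap ℝ (Matrix ι ι 𝕜) b := by gcongr
    _ = algebraMap ℝ (Matrix ι ι 𝕜) r := by
      rw [Algebra.smul_def, ← map_mul, div_mul_cancel₀ _ hb.ne']
    _ ≤ Q := hrQ

end Loewner

section GramForm

variable {ι E : Type*} [Fintype ι] [SeminormedAddCommGroup E] [InnerProductSpace ℝ E]

/-- The quadratic form of a real matrix `M` on families of vectors of `E`, that is
`∑ i, ∑ j, M i j * ⟪x i, x j⟫`, written as a trace so that products with `M` can be moved around
cyclically. -/
noncomputable def gramForm (M : Matrix ι ι ℝ) (x : ι → E) : ℝ :=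
  (M * gram ℝ x).trace

theorem gramForm_one [DecidableEq ι] (x : ι → E) : gramForm 1 x = ∑ i, ‖x i‖ ^ 2 := by
  simp [gramForm, trace]

theorem gramForm_sub (M N : Matrix ι ι ℝ) (x : ι → E) :
    gramForm (M - N) x = gramForm M x - gramForm N x := by
  rw [gramForm, sub_mul, trace_sub, gramForm, gramForm]

theorem gramForm_neg (M : Matrix ι ι ℝ) (x : ι → E) : gramForm (-M) x = -gramForm M x := by
  rw [gramForm, neg_mul, trace_neg, gramForm]

theorem gramForm_smul (c : ℝ) (M : Matrix ι ι ℝ) (x : ι → E) :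
    gramForm (c • M) x = c * gramForm M x := by
  rw [gramForm, smul_mul, trace_smul, smul_eq_mul, gramForm]

-- The trace is the sum of the entries of the Schur product of `M` with the Gram matrix.
theorem gramForm_nonneg {M : Matrix ι ι ℝ} (hM : M.PosSemidef) (x : ι → E) :
    0 ≤ gramForm M x := by
  have h := (hM.hadamard (posSemidef_gram ℝ x)).dotProduct_mulVec_nonneg 1
  have hsymm : (gram ℝ x)ᵀ = gram ℝ x := isHermitian_gram ℝ x
  simp only [star_one, one_dotProduct, mulVec, dotProduct_one, sum_hadamard_eq, hsymm] at h
  exact h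

theorem gramForm_mono {M N : Matrix ι ι ℝ} (h : M ≤ N) (x : ι → E) :
    gramForm M x ≤ gramForm N x := by
  rw [← sub_nonneg, ← gramForm_sub]
  exact gramForm_nonneg h x

theorem tendsto_zero_of_tendsto_gramForm {α : Type*} {l : Filter α} {P : Matrix ι ι ℝ}
    (hP : P.PosDef) {x : α → ι → E} (h : Tendsto (fun a ↦ gramForm P (x a)) l (𝓝 0)) :
    Tendsto x l (𝓝 0) := by
  classical
  obtain ⟨c, hc, hcP⟩ := exists_pos_smul_le_of_posDef (M := 1) isHermitian_one hP
  refine tendsto_pi_nhds.2 fun i ↦ ?_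
  have hbound (a : α) : ‖x a i‖ ^ 2 ≤ c⁻¹ * gramForm P (x a) := by
    rw [le_inv_mul_iff₀ hc]
    calc c * ‖x a i‖ ^ 2 ≤ c * ∑ j, ‖x a j‖ ^ 2 := by
          gcongr
          exact Finset.single_le_sum (fun j _ ↦ sq_nonneg ‖x a j‖) (Finset.mem_univ i)
      _ = gramForm (c • 1) (x a) := by rw [gramForm_smul, gramForm_one]
      _ ≤ gramForm P (x a) := gramForm_mono hcP (x a)
  have hsq : Tendsto (fun a ↦ ‖x a i‖ ^ 2) l (𝓝 0) :=
    squeeze_zero (fun a ↦ sq_nonneg _) hbound (by simpa using h.const_mul c⁻¹)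
  exact tendsto_zero_iff_norm_tendsto_zero.2 (by simpa using hsq.sqrt)

end GramForm

theorem le_mul_exp_of_hasDerivAt_of_le {W W' : ℝ → ℝ} {K : ℝ}
    (hW : ∀ t, 0 ≤ t → HasDerivAt W (W' t) t) (hW' : ∀ t, 0 ≤ t → W' t ≤ K * W t) {t : ℝ}
    (ht : 0 ≤ t) : W t ≤ W 0 * Real.exp (K * t) := by
  have h := le_gronwallBound_of_liminf_deriv_right_le (a := 0) (b := t) (K := K) (ε := 0)
    (fun s hs ↦ (hW s hs.1).continuousAt.continuousWithinAt)
    (fun s hs _ ↦ (hW s hs.1).hasDerivWithinAt.liminf_right_slope_le) le_rfl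
    (fun s hs ↦ by simpa using hW' s hs.1) t ⟨ht, le_rfl⟩
  rwa [sub_zero, gronwallBound_ε0] at h

section Lyapunov

variable {ι E : Type*} [Fintype ι] [DecidableEq ι] [NormedAddCommGroup E] [InnerProductSpace ℝ E]
  {A : Matrix ι ι ℝ} {x : ℝ → ι → E} {t : ℝ}

theorem hasDerivAt_gram_apply (hx : HasDerivAt x (A • x t) t) (i j : ι) :
    HasDerivAt (fun s ↦ gram ℝ (x s) i j) ((A * gram ℝ (x t) + gram ℝ (x t) * Aᵀ) i j) t := by
  rw [hasDerivAt_pi] at hx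
  refine ((hx i).inner ℝ (hx j)).congr_deriv ?_
  simp only [Module.smul_apply, inner_sum, sum_inner, inner_smul_left, inner_smul_right,
    Matrix.add_apply, mul_apply, gram_apply, transpose_apply]
  simp [mul_comm, add_comm]

theorem hasDerivAt_gramForm (M : Matrix ι ι ℝ) (hx : HasDerivAt x (A • x t) t) :
    HasDerivAt (fun s ↦ gramForm M (x s)) (gramForm (Aᵀ * M + M * A) (x t)) t := by
  have hcycle : gramForm (Aᵀ * M + M * A) (x t) =
      (M * (A * gram ℝ (x t) + gram ℝ (x t) * Aᵀ)).trace := by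
    rw [gramForm, add_mul, mul_add, trace_add, trace_add, add_comm, Matrix.mul_assoc M A,
      Matrix.mul_assoc Aᵀ, trace_mul_comm Aᵀ, Matrix.mul_assoc M]
  rw [hcycle]
  exact .fun_sum fun i _ ↦ .fun_sum fun j _ ↦ (hasDerivAt_gram_apply hx j i).const_mul (M i j)

theorem tendsto_zero_of_lyapunov {P Q : Matrix ι ι ℝ} (hP : P.PosDef) (hQ : Q.PosDef)
    (hA : Aᵀ * P + P * A = -Q) (hx : ∀ t, 0 ≤ t → HasDerivAt x (A • x t) t) :
    Tendsto x atTop (𝓝 0) := by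
  obtain ⟨k, hk, hkP⟩ := exists_pos_smul_le_of_posDef hP.isHermitian hQ
  have hderiv (t : ℝ) (ht : 0 ≤ t) :
      HasDerivAt (fun s ↦ gramForm P (x s)) (-gramForm Q (x t)) t := by
    simpa only [hA, gramForm_neg] using hasDerivAt_gramForm P (hx t ht)
  have hle (t : ℝ) : -gramForm Q (x t) ≤ -k * gramForm P (x t) := by
    rw [neg_mul, neg_le_neg_iff, ← gramForm_smul]
    exact gramForm_mono hkP (x t)
  have hexp : Tendsto (fun t ↦ gramForm P (x 0) * Real.exp (-k * t)) atTop (𝓝 0) := by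
    simpa using (Real.tendsto_exp_atBot.comp
      (tendsto_id.const_mul_atTop_of_neg (neg_neg_of_pos hk))).const_mul (gramForm P (x 0))
  refine tendsto_zero_of_tendsto_gramForm hP (squeeze_zero' ?_ ?_ hexp)
  · exact .of_forall fun t ↦ gramForm_nonneg hP.posSemidef (x t)
  · filter_upwards [eventually_ge_atTop 0] with t ht
    exact le_mul_exp_of_hasDerivAt_of_le hderiv (fun s _ ↦ hle s) ht

end Lyapunov

section PID

/-- The system matrix of the PID loop in the state `(e, ė, y)`, where `y` is the integral error
measured from its equilibrium value. -/
def closedLoopMatrix (kP kD kI : ℝ) : Matrix (Fin 3) (Fin 3) ℝ :=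
  !![0, 1, 0; -kP, -kD, -kI; 1, 0, 0]

theorem closedLoopMatrix_lyapunov_equation (kP kD kI α β γ σ : ℝ) :
    (closedLoopMatrix kP kD kI)ᵀ * !![kP, α, σ; α, 1, β; σ, β, γ] +
        !![kP, α, σ; α, 1, β; σ, β, γ] * closedLoopMatrix kP kD kI =
      -!![2 * (kP * α - σ), kD * α - β, kI * α + kP * β - γ;
          kD * α - β, 2 * (kD - α), kI + β * kD - σ;
          kI * α + kP * β - γ, kI + β * kD - σ, 2 * β * kI] := by
  ext i j
  fin_cases i <;> fin_cases j <;> simp [closedLoopMatrix, mul_apply, Fin.sum_univ_three] <;> ring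

theorem hasDerivAt_closedLoop {E : Type*} [NormedAddCommGroup E] [NormedSpace ℝ E] {d : E}
    {kP kD kI t : ℝ} (hkI : kI ≠ 0) {e e' z : ℝ → E} (he : HasDerivAt e (e' t) t)
    (he' : HasDerivAt e' (d - kP • e t - kD • e' t - kI • z t) t) (hz : HasDerivAt z (e t) t) :
    HasDerivAt (fun s ↦ ![e s, e' s, z s - (1 / kI) • d])
      (closedLoopMatrix kP kD kI • ![e t, e' t, z t - (1 / kI) • d]) t := by
  have hforce : d - kP • e t - kD • e' t - kI • z t =
      -kP • e t + -kD • e' t + -kI • (z t - (1 / kI) • d) := by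
    match_scalars <;> field_simp
  rw [hforce] at he'
  have hcomponents := And.intro he (And.intro he' (hz.sub_const ((1 / kI) • d)))
  rw [hasDerivAt_pi]
  simpa [Fin.forall_fin_succ, closedLoopMatrix, Fin.sum_univ_three] using hcomponents

end PID

theorem stmt_6_general {E : Type*} [NormedAddCommGroup E] [InnerProductSpace ℝ E] {d : E}
    {kP kD kI α β γ σ : ℝ}
    (hP : (!![kP, α, σ; α, 1, β; σ, β, γ] : Matrix (Fin 3) (Fin 3) ℝ).PosDef)
    (hQ : (!![2 * (kP * α - σ), kD * α - β, kI * α + kP * β - γ;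
              kD * α - β, 2 * (kD - α), kI + β * kD - σ;
              kI * α + kP * β - γ, kI + β * kD - σ, 2 * β * kI] :
            Matrix (Fin 3) (Fin 3) ℝ).PosDef)
    {e e' z : ℝ → E} (he : ∀ t, 0 ≤ t → HasDerivAt e (e' t) t)
    (he' : ∀ t, 0 ≤ t → HasDerivAt e' (d - kP • e t - kD • e' t - kI • z t) t)
    (hz : ∀ t, 0 ≤ t → HasDerivAt z (e t) t) :
    Tendsto e atTop (𝓝 0) ∧ Tendsto e' atTop (𝓝 0) ∧ Tendsto z atTop (𝓝 ((1 / kI) • d)) := by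
  have hkI : kI ≠ 0 := right_ne_zero_of_mul (hQ.diag_pos (i := 2)).ne'
  have hstate := tendsto_pi_nhds.1 <| tendsto_zero_of_lyapunov hP hQ
    (closedLoopMatrix_lyapunov_equation kP kD kI α β γ σ)
    fun t ht ↦ hasDerivAt_closedLoop hkI (he t ht) (he' t ht) (hz t ht)
  exact ⟨hstate 0, hstate 1, tendsto_sub_nhds_zero_iff.1 (hstate 2)⟩

theorem stmt_6 (n : ℕ) (hn : 1 ≤ n) (d : EuclideanSpace ℝ (Fin n))
    (kP kD kI α β γ σ : ℝ) (hkI : kI ≠ 0)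
    (hP : (!![kP, α, σ; α, 1, β; σ, β, γ] : Matrix (Fin 3) (Fin 3) ℝ).PosDef)
    (hQ : (!![2 * (kP * α - σ), kD * α - β, kI * α + kP * β - γ;
              kD * α - β, 2 * (kD - α), kI + β * kD - σ;
              kI * α + kP * β - γ, kI + β * kD - σ, 2 * β * kI] :
            Matrix (Fin 3) (Fin 3) ℝ).PosDef) :
    ∀ e e' z : ℝ → EuclideanSpace ℝ (Fin n),
      (∀ t, HasDerivAt e (e' t) t) →
      (∀ t, HasDerivAt e' (d - kP • e t - kD • e' t - kI • z t) t) →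
      (∀ t, HasDerivAt z (e t) t) →
      Filter.Tendsto e Filter.atTop (nhds 0) ∧
        Filter.Tendsto e' Filter.atTop (nhds 0) ∧
        Filter.Tendsto z Filter.atTop (nhds ((1 / kI) • d)) :=
  fun _ _ _ he he' hz ↦
    stmt_6_general hP hQ (fun t _ ↦ he t) (fun t _ ↦ he' t) (fun t _ ↦ hz t)
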